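/- For all reals $t \ge 1$, $s \ge 3$, $\epsilon \in (0,1]$, $c \in (0,1]$ and $0 < \omega \le \delta \le e^{-e}$: if $$\frac{1}{t}\log\left(\frac{\log((1+\epsilon)t)}{\omega}\right) \ge \frac{c}{s}\log\left(\frac{\log((1+\epsilon)s)}{\delta}\right),$$ then $$t \le \frac{s}{c}\cdot\frac{\log\left(2\log\left(\frac{1}{c\omega}\right)/\omega\right)}{\log(1/\delta)},$$ where $\log$ denotes the natural logarithm. -/

import Mathlib

/-- For `x > 1`, the iterated logarithm is dominated by the square root. -/
lemma Real.log_log_lt_sqrt {x : ℝ} (hx : 1 < x) : Real.log (Real.log x) < Real.sqrt x := by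
  have h1 : 1 < Real.sqrt x := Real.lt_sqrt_of_sq_lt (by simpa using hx)
  have hpos : 0 < Real.log (Real.sqrt x) := Real.log_pos h1
  have heq : Real.log x = 2 * Real.log (Real.sqrt x) := by
    rw [Real.log_sqrt (by linarith)]; ring
  rw [heq, Real.log_mul (by norm_num) hpos.ne']
  have h2 := Real.log_le_sub_one_of_pos hpos
  have h3 := Real.log_le_sub_one_of_pos (show (0 : ℝ) < Real.sqrt x by linarith)
  have h4 := Real.log_le_sub_one_of_pos (show (0 : ℝ) < 2 by norm_num)
  linarith

/-- If `κ u` is at most `log (log u / ω)`, then `u ≤ (κ ω)⁻²`, in logarithmic form. -/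
lemma Real.log_le_of_mul_le_log_log {u κ ω : ℝ} (hu : 1 < u) (hκ : 0 < κ) (hω0 : 0 < ω)
    (hω1 : ω ≤ 1) (h : κ * u ≤ -Real.log ω + Real.log (Real.log u)) :
    Real.log u ≤ 2 * -Real.log (κ * ω) := by
  by_contra! hlt
  have hr1 : 1 < Real.sqrt u := Real.lt_sqrt_of_sq_lt (by simpa using hu)
  have hr0 : 0 < Real.sqrt u := by linarith
  have hsq : Real.sqrt u * Real.sqrt u = u := Real.mul_self_sqrt (by linarith)
  have hκω : 0 < κ * ω := mul_pos hκ hω0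
  have hprod : 1 < κ * ω * Real.sqrt u := by
    rw [← Real.log_pos_iff (by positivity), Real.log_mul hκω.ne' hr0.ne',
      Real.log_sqrt (by linarith)]
    linarith
  have hlow : Real.sqrt u / ω ≤ κ * u := by
    rw [div_le_iff₀ hω0]
    nlinarith
  have hlogω : -Real.log ω ≤ 1 / ω - 1 := by
    have := Real.log_le_sub_one_of_pos (one_div_pos.mpr hω0)
    rwa [one_div, Real.log_inv, ← one_div] at this
  have hsplit : 1 / ω + Real.sqrt u - 1 ≤ Real.sqrt u / ω := by
    have h1 : 1 ≤ 1 / ω := by rw [le_div_iff₀ hω0]; linarith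
    have h2 : Real.sqrt u / ω = Real.sqrt u * (1 / ω) := by ring
    rw [h2]
    nlinarith
  have := Real.log_log_lt_sqrt hu
  linarith

theorem stmt_2 (t s ε c ω δ : ℝ) (ht : 1 ≤ t) (hs : 3 ≤ s) (hε0 : 0 < ε) (hε1 : ε ≤ 1)
    (hc0 : 0 < c) (hc1 : c ≤ 1) (hω0 : 0 < ω) (hωδ : ω ≤ δ)
    (hδ : δ ≤ Real.exp (-Real.exp 1))
    (h : (1 / t) * Real.log (Real.log ((1 + ε) * t) / ω)
        ≥ (c / s) * Real.log (Real.log ((1 + ε) * s) / δ)) :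
    t ≤ (s / c) * (Real.log (2 * Real.log (1 / (c * ω)) / ω) / Real.log (1 / δ)) := by
  have ht0 : 0 < t := by linarith
  have hs0 : 0 < s := by linarith
  have hδ0 : 0 < δ := by linarith
  have he : 1 < Real.exp 1 := by simp
  have hu : 1 < (1 + ε) * t := by nlinarith
  have hv : Real.exp 1 < (1 + ε) * s := by
    have := Real.exp_one_lt_d9
    nlinarith
  have hL : Real.exp 1 ≤ -Real.log δ := by
    have := (Real.log_le_iff_le_exp hδ0).mpr hδ
    linarith
  have hωL : Real.log ω ≤ Real.log δ := Real.log_le_log hω0 hωδ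
  have hω1 : ω ≤ 1 := by
    refine hωδ.trans (hδ.trans ?_)
    rw [Real.exp_le_one_iff]; linarith
  have ha : 1 < Real.log ((1 + ε) * s) := by
    rwa [Real.lt_log_iff_exp_lt (by positivity)]
  have hlogu : 0 < Real.log ((1 + ε) * t) := Real.log_pos hu
  have hA : 0 < Real.log (Real.log ((1 + ε) * s)) := Real.log_pos ha
  have hb : Real.log (1 / (c * ω)) = -Real.log c - Real.log ω := by
    rw [one_div, Real.log_inv, Real.log_mul hc0.ne' hω0.ne']; ring
  have hlogc : Real.log c ≤ 0 := Real.log_nonpos hc0.le hc1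
  have hb1 : 1 < Real.log (1 / (c * ω)) := by rw [hb]; linarith
  have hM : Real.log (2 * Real.log (1 / (c * ω)) / ω)
      = Real.log (2 * Real.log (1 / (c * ω))) - Real.log ω :=
    Real.log_div (by positivity) hω0.ne'
  have hM1 : 0 < Real.log (2 * Real.log (1 / (c * ω))) := Real.log_pos (by linarith)
  rw [Real.log_div hlogu.ne' hω0.ne', Real.log_div (by linarith) hδ0.ne'] at h
  rw [show Real.log (1 / δ) = -Real.log δ by rw [one_div, Real.log_inv], hM]
  set L := -Real.log δ with hLdef
  set a := Real.log ((1 + ε) * s) with hadef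
  set b := Real.log (1 / (c * ω)) with hbdef
  set A := Real.log a with hAdef
  have hAL : Real.exp 1 ≤ A + L := by linarith
  have hAL0 : 0 < A + L := by linarith
  have h' : c / s * (A + L) * t ≤ -Real.log ω + Real.log (Real.log ((1 + ε) * t)) := by
    have h1 := mul_le_mul_of_nonneg_right h ht0.le
    have h2 : 1 / t * (Real.log (Real.log ((1 + ε) * t)) - Real.log ω) * t
        = -Real.log ω + Real.log (Real.log ((1 + ε) * t)) := by field_simp; ring
    rw [h2] at h1
    calc _ = c / s * (A - Real.log δ) * t := by rw [hLdef]; ring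
      _ ≤ _ := h1
  have hlog := Real.log_le_of_mul_le_log_log (κ := c * (A + L) / ((1 + ε) * s)) hu
    (by positivity) hω0 hω1 (by
      refine le_trans (le_of_eq ?_) h'
      field_simp)
  have hκ : -Real.log (c * (A + L) / ((1 + ε) * s) * ω) = a + b - Real.log (A + L) := by
    rw [Real.log_mul (by positivity) hω0.ne', Real.log_div (by positivity) (by positivity),
      Real.log_mul hc0.ne' hAL0.ne', hb]
    ring
  have hlogAL : 1 ≤ Real.log (A + L) := by
    rwa [Real.le_log_iff_exp_le hAL0]
  have hlogu_le : Real.log ((1 + ε) * t) ≤ a * (2 * b) := by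
    rw [hκ] at hlog
    nlinarith
  have hll : Real.log (Real.log ((1 + ε) * t)) ≤ A + Real.log (2 * b) := by
    rw [hAdef, ← Real.log_mul (by linarith) (by linarith)]
    exact Real.log_le_log hlogu hlogu_le
  have hL0 : 0 < L := by linarith
  set M := Real.log (2 * b) - Real.log ω with hMdef
  have hLM : L ≤ M := by linarith
  calc t = s / c * (c / s * (A + L) * t / (A + L)) := by field_simp
    _ ≤ s / c * ((A + M) / (A + L)) := by gcongr; linarith
    _ ≤ s / c * (M / L) := by
      refine mul_le_mul_of_nonneg_left ?_ (by positivity)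
      rw [div_le_div_iff₀ hAL0 hL0]
      nlinarith
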